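/- Under Setup (A), the Schrödinger potentials are weakly differentiable with ∇φ(x) = E_π[∇_x c(X,Y) | X = x] = ∫ ∇_x c(x,y) exp((φ(x)+ψ(y)−c(x,y))/ε) ν(dy) and ∇ψ(y) = E_π[∇_y c(X,Y) | Y = y] = ∫ ∇_y c(x,y) exp((φ(x)+ψ(y)−c(x,y))/ε) μ(dx). Moreover these weak gradients are themselves weakly differentiable, with ∇²φ(x) = E_π[∇²_{xx} c(X,Y) | X = x] − ε^{-1} Cov_π(∇_x c(X,Y) | X = x) and ∇²ψ(y) = E_π[∇²_{yy} c(X,Y) | Y = y] − ε^{-1} Cov_π(∇_y c(X,Y) | Y = y), where Cov_π(A | X = x) := E_π[A ⊗ A | X = x] − E_π[A | X = x] ⊗ E_π[A | X = x]. -/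

import Mathlib

open MeasureTheory
open scoped RealInnerProductSpace

noncomputable section

variable {d : ℕ}

local notation "E" => EuclideanSpace ℝ (Fin d)

/-- The divergence of a vector field on `ℝ^d`, as the trace of its Jacobian. -/
def dvg (h : E → E) (x : E) : ℝ :=
  ∑ i : Fin d, ⟪fderiv ℝ h x (EuclideanSpace.single i 1), EuclideanSpace.single i 1⟫

/-- `g` is the weak gradient of `f`. -/
def HasWeakGradient (f : E → ℝ) (g : E → E) : Prop :=
  LocallyIntegrable f volume ∧ LocallyIntegrable g volume ∧
  ∀ h : E → E, ContDiff ℝ (⊤ : ℕ∞) h → HasCompactSupport h →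
    ∫ x, f x * dvg h x = - ∫ x, ⟪g x, h x⟫

/-- The outer (tensor) product `a ⊗ b` of two vectors, as the linear map
`v ↦ ⟪b, v⟫ a`. -/
def outer (a b : E) : E →L[ℝ] E := (innerSL ℝ b).smulRight a

/-- `A` is the weak Jacobian of the vector field `f`: each component of `f` has a
weak gradient, given by the corresponding row of `A`. -/
def HasWeakJacobian (f : E → E) (A : E → E →L[ℝ] E) : Prop :=
  ∀ i : Fin d, HasWeakGradient (fun x => ⟪f x, EuclideanSpace.single i 1⟫)
    (fun x => ContinuousLinearMap.adjoint (A x) (EuclideanSpace.single i 1))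

/-- The density `exp((φ(x)+ψ(y)−c(x,y))/ε)` of `π` with respect to `μ ⊗ ν`; for fixed
`x`, `y ↦ schrDensity ε c φ ψ x y` is the density of the conditional law `π^x` w.r.t. `ν`,
and symmetrically. -/
def schrDensity (ε : ℝ) (c : E × E → ℝ) (φ ψ : E → ℝ) (x y : E) : ℝ :=
  Real.exp ((φ x + ψ y - c (x, y)) / ε)

/-- Partial gradient `∇_x c(x,y)`. -/
def gradx (c : E × E → ℝ) (x y : E) : E := gradient (fun x' => c (x', y)) x

/-- Partial gradient `∇_y c(x,y)`. -/
def grady (c : E × E → ℝ) (x y : E) : E := gradient (fun y' => c (x, y')) y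

/-- Partial Hessian `∇²_{xx} c(x,y)`. -/
def hessx (c : E × E → ℝ) (x y : E) : E →L[ℝ] E := fderiv ℝ (fun x' => gradx c x' y) x

/-- Partial Hessian `∇²_{yy} c(x,y)`. -/
def hessy (c : E × E → ℝ) (x y : E) : E →L[ℝ] E := fderiv ℝ (fun y' => grady c x y') y

/-!
The Schrödinger equation for `x` reads `φ = -ε log F` with `F x = ∫ exp((ψ(y) - c(x,y))/ε) ν(dy)`,
whose integrand is `schrDensity ε c 0 ψ x y`. Both formulas follow by differentiating under the
integral sign: `∇φ` is the mean of `∇ₓc` under the conditional law, and the derivative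
`-ε⁻¹ (∇ₓc - ∇φ)` of the log-density of that law produces the covariance term of `∇²φ`. The
potentials are therefore classically `C²`, and weak derivatives come from integration by parts.

The domination has to be found without any a priori bound on `ψ`. It comes from the equation for
`y`: as `∇ₓc` has linear growth, `|c(x,y) - c(0,y)| ≤ A (1 + |y|)` for `x` in a ball of positive
`μ`-mass, so `∫ exp((φ(x) + ψ(y) - c(x,y))/ε) μ(dx) = 1` bounds `exp((ψ(y) - c(0,y))/ε)` by an
exponential of `|y|`. All integrands are then locally dominated by such exponentials, which are
`ν`-integrable by the Gaussian moment. The statement for `ψ` is the one for `φ` with the roles of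
the two variables exchanged.
-/

open Filter Topology Asymptotics

section ExponentialDomination

variable {X Y W : Type*} [NormedAddCommGroup Y]

theorem isBigO_exp_mul_norm {K K' : ℝ} (h : K ≤ K') (l : Filter (X × Y)) :
    (fun z : X × Y => Real.exp (K * ‖z.2‖)) =O[l] fun z => Real.exp (K' * ‖z.2‖) :=
  isBigO_of_le l fun z => by
    simp only [Real.norm_eq_abs, Real.abs_exp]
    gcongr

variable [TopologicalSpace X] [MeasurableSpace Y] [NormedAddCommGroup W] {ν : Measure Y}

/-- `ν` has finite exponential moments of every order. -/
def HasExpMoments (ν : Measure Y) : Prop :=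
  ∀ K : ℝ, Integrable (fun y => Real.exp (K * ‖y‖)) ν

/-- A family `x ↦ f x` of `ν`-measurable functions bounded, locally uniformly in `x`, by
`y ↦ C exp (K ‖y‖)`. If `ν` has exponential moments, integration of such families against `ν`
commutes with limits and derivatives in `x`. -/
structure LocallyExpDominated (f : X → Y → W) (ν : Measure Y) : Prop where
  aestronglyMeasurable : ∀ x, AEStronglyMeasurable (f x) ν
  exists_isBigO : ∀ x₀, ∃ K : ℝ,
    (fun z : X × Y => f z.1 z.2) =O[𝓝 x₀ ×ˢ ⊤] fun z => Real.exp (K * ‖z.2‖)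

namespace LocallyExpDominated

variable {f f' : X → Y → W}

theorem exists_eventually_norm_le (hf : LocallyExpDominated f ν) (x₀ : X) :
    ∃ C K : ℝ, ∀ᶠ x in 𝓝 x₀, ∀ y, ‖f x y‖ ≤ C * Real.exp (K * ‖y‖) := by
  obtain ⟨K, hK⟩ := hf.exists_isBigO x₀
  obtain ⟨C, hC⟩ := hK.bound
  rw [← principal_univ, eventually_prod_principal_iff] at hC
  exact ⟨C, K, hC.mono fun x hx y => by simpa using hx y⟩

theorem of_exists_eventually_norm_le (hm : ∀ x, AEStronglyMeasurable (f x) ν)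
    (hf : ∀ x₀, ∃ C K : ℝ, ∀ᶠ x in 𝓝 x₀, ∀ y, ‖f x y‖ ≤ C * Real.exp (K * ‖y‖)) :
    LocallyExpDominated f ν where
  aestronglyMeasurable := hm
  exists_isBigO x₀ := by
    obtain ⟨C, K, hC⟩ := hf x₀
    refine ⟨K, IsBigO.of_bound C ?_⟩
    rw [← principal_univ, eventually_prod_principal_iff]
    exact hC.mono fun x hx y _ => by simpa using hx y

theorem of_continuous {m : X → W} (hm : Continuous m) :
    LocallyExpDominated (fun x (_ : Y) => m x) ν where
  aestronglyMeasurable _ := aestronglyMeasurable_const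
  exists_isBigO x₀ := by
    have hbdd : (fun z : X × Y => m z.1) =O[𝓝 x₀ ×ˢ ⊤] fun _ => (1 : ℝ) :=
      ((hm.tendsto x₀).comp tendsto_fst).isBigO_one ℝ
    exact ⟨0, by simpa only [zero_mul, Real.exp_zero] using hbdd⟩

theorem of_lipschitzWith {X : Type*} [NormedAddCommGroup X]
    [OpensMeasurableSpace Y] [SecondCountableTopology Y] {R : NNReal} {f : X × Y → W}
    (hf : LipschitzWith R f) : LocallyExpDominated (fun x y => f (x, y)) ν := by
  refine .of_exists_eventually_norm_le
    (fun x => (hf.continuous.comp (.prodMk_right x)).aestronglyMeasurable) fun x₀ =>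
    ⟨‖f 0‖ + R * (‖x₀‖ + 1), 1, ?_⟩
  filter_upwards [continuous_norm.continuousAt.eventually_le_const (lt_add_one ‖x₀‖)] with x hx y
  have hlip : ‖f (x, y) - f 0‖ ≤ R * ‖(x, y)‖ := by simpa using hf.norm_sub_le (x, y) 0
  have hnorm : ‖(x, y)‖ ≤ (‖x₀‖ + 1) + ‖y‖ :=
    norm_prod_le_iff.2 ⟨by simpa using hx.trans (le_add_of_nonneg_right (norm_nonneg y)), by
      simpa using by positivity⟩
  have hexp : 1 + ‖y‖ ≤ Real.exp (1 * ‖y‖) := by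
    rw [one_mul, add_comm]
    exact Real.add_one_le_exp ‖y‖
  calc ‖f (x, y)‖ ≤ ‖f 0‖ + ‖f (x, y) - f 0‖ := norm_le_insert' _ _
    _ ≤ ‖f 0‖ + R * (‖x₀‖ + 1 + ‖y‖) := by gcongr; exact hlip.trans (by gcongr)
    _ ≤ (‖f 0‖ + R * (‖x₀‖ + 1)) * (1 + ‖y‖) := by
      have : 0 ≤ (‖f 0‖ + R * ‖x₀‖) * ‖y‖ := by positivity
      linarith
    _ ≤ (‖f 0‖ + R * (‖x₀‖ + 1)) * Real.exp (1 * ‖y‖) := by gcongr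

theorem sub (hf : LocallyExpDominated f ν) (hf' : LocallyExpDominated f' ν) :
    LocallyExpDominated (fun x y => f x y - f' x y) ν where
  aestronglyMeasurable x := (hf.aestronglyMeasurable x).sub (hf'.aestronglyMeasurable x)
  exists_isBigO x₀ := by
    obtain ⟨K, hK⟩ := hf.exists_isBigO x₀
    obtain ⟨K', hK'⟩ := hf'.exists_isBigO x₀
    exact ⟨max K K', (hK.trans (isBigO_exp_mul_norm (le_max_left K K') _)).sub
      (hK'.trans (isBigO_exp_mul_norm (le_max_right K K') _))⟩

theorem integrable (hν : HasExpMoments ν) (hf : LocallyExpDominated f ν) (x : X) :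
    Integrable (f x) ν := by
  obtain ⟨C, K, h⟩ := hf.exists_eventually_norm_le x
  exact ((hν K).const_mul C).mono' (hf.aestronglyMeasurable x)
    (Eventually.of_forall h.self_of_nhds)

variable [NormedSpace ℝ W] {W' W'' : Type*} [NormedAddCommGroup W'] [NormedSpace ℝ W']
  [NormedAddCommGroup W''] [NormedSpace ℝ W'']

theorem bilin {g : X → Y → W'} (B : W →L[ℝ] W' →L[ℝ] W'') (hf : LocallyExpDominated f ν)
    (hg : LocallyExpDominated g ν) : LocallyExpDominated (fun x y => B (f x y) (g x y)) ν where
  aestronglyMeasurable x :=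
    B.aestronglyMeasurable_comp₂ (hf.aestronglyMeasurable x) (hg.aestronglyMeasurable x)
  exists_isBigO x₀ := by
    obtain ⟨K, hK⟩ := hf.exists_isBigO x₀
    obtain ⟨K', hK'⟩ := hg.exists_isBigO x₀
    refine ⟨K + K', ?_⟩
    simp only [add_mul, Real.exp_add]
    exact B.isBoundedBilinearMap.isBigO_comp.trans (hK.norm_left.mul hK'.norm_left)

theorem clm_comp (hf : LocallyExpDominated f ν) (L : W →L[ℝ] W') :
    LocallyExpDominated (fun x y => L (f x y)) ν where
  aestronglyMeasurable x := L.continuous.comp_aestronglyMeasurable (hf.aestronglyMeasurable x)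
  exists_isBigO x₀ := (hf.exists_isBigO x₀).imp fun _ h => (L.isBigO_comp _ _).trans h

theorem smul {p : X → Y → ℝ} (hp : LocallyExpDominated p ν) (hf : LocallyExpDominated f ν) :
    LocallyExpDominated (fun x y => p x y • f x y) ν :=
  hp.bilin (ContinuousLinearMap.lsmul ℝ ℝ) hf

theorem const_smul (hf : LocallyExpDominated f ν) (a : ℝ) :
    LocallyExpDominated (fun x y => a • f x y) ν :=
  (of_continuous (m := fun _ => a) continuous_const).smul hf

theorem continuous_integral [FirstCountableTopology X] (hν : HasExpMoments ν)
    (hf : LocallyExpDominated f ν) (hcont : ∀ y, Continuous fun x => f x y) :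
    Continuous fun x => ∫ y, f x y ∂ν := by
  refine continuous_iff_continuousAt.2 fun x₀ => ?_
  obtain ⟨C, K, h⟩ := hf.exists_eventually_norm_le x₀
  exact continuousAt_of_dominated (Eventually.of_forall hf.aestronglyMeasurable)
    (h.mono fun x hx => Eventually.of_forall hx) ((hν K).const_mul C)
    (Eventually.of_forall fun y => (hcont y).continuousAt)

theorem hasFDerivAt_integral {X : Type*} [NormedAddCommGroup X]
    [NormedSpace ℝ X] (hν : HasExpMoments ν) {f : X → Y → W} {f' : X → Y → X →L[ℝ] W}
    (hf : LocallyExpDominated f ν) (hf' : LocallyExpDominated f' ν)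
    (hderiv : ∀ x y, HasFDerivAt (fun x => f x y) (f' x y) x) (x₀ : X) :
    HasFDerivAt (fun x => ∫ y, f x y ∂ν) (∫ y, f' x₀ y ∂ν) x₀ := by
  obtain ⟨C, K, h⟩ := hf'.exists_eventually_norm_le x₀
  exact hasFDerivAt_integral_of_dominated_of_fderiv_le h
    (Eventually.of_forall hf.aestronglyMeasurable) (hf.integrable hν x₀)
    (hf'.aestronglyMeasurable x₀) (Eventually.of_forall fun y x hx => hx y)
    ((hν K).const_mul C) (Eventually.of_forall fun y x _ => hderiv x y)

theorem hasGradientAt_integral {X : Type*} [NormedAddCommGroup X] [InnerProductSpace ℝ X]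
    [CompleteSpace X] (hν : HasExpMoments ν) {f : X → Y → ℝ} {g : X → Y → X}
    (hf : LocallyExpDominated f ν) (hg : LocallyExpDominated g ν)
    (hgrad : ∀ x y, HasGradientAt (fun x => f x y) (g x y) x) (x₀ : X) :
    HasGradientAt (fun x => ∫ y, f x y ∂ν) (∫ y, g x₀ y ∂ν) x₀ := by
  have hfderiv := hf.hasFDerivAt_integral hν (hg.clm_comp (innerSL ℝ))
    (fun x y => (hgrad x y).hasFDerivAt) x₀
  rwa [(innerSL ℝ).integral_comp_comm (hg.integrable hν x₀)] at hfderiv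

end LocallyExpDominated

theorem hasExpMoments_of_integrable_exp_mul_norm_sq [BorelSpace Y] {δ : ℝ} (hδ : 0 < δ)
    (hν : Integrable (fun y => Real.exp (δ * ‖y‖ ^ 2)) ν) : HasExpMoments ν := by
  intro K
  refine (hν.const_mul (Real.exp (K ^ 2 / (4 * δ)))).mono' (by fun_prop)
    (Eventually.of_forall fun y => ?_)
  have hsq : K ^ 2 / (4 * δ) + δ * ‖y‖ ^ 2 - K * ‖y‖ = (K - 2 * δ * ‖y‖) ^ 2 / (4 * δ) := by
    field_simp
    ring
  have hsq_nonneg : 0 ≤ (K - 2 * δ * ‖y‖) ^ 2 / (4 * δ) := by positivity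
  rw [Real.norm_eq_abs, Real.abs_exp, ← Real.exp_add, Real.exp_le_exp]
  linarith

theorem hasExpMoments_withDensity [BorelSpace Y] {δ : ℝ} (hδ : 0 < δ) {ρ g : Y → ℝ}
    (hρ : Measurable ρ) (hρ_nonneg : ∀ y, 0 ≤ ρ y) (hρg : ∀ y, ρ y ≤ g y)
    (hg : Integrable (fun y => Real.exp (δ * ‖y‖ ^ 2) * g y) ν) :
    HasExpMoments (ν.withDensity fun y => ENNReal.ofReal (ρ y)) := by
  refine hasExpMoments_of_integrable_exp_mul_norm_sq hδ ?_
  rw [integrable_withDensity_iff_integrable_smul' hρ.ennreal_ofReal (by simp)]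
  refine hg.mono' (by fun_prop) (Eventually.of_forall fun y => ?_)
  rw [ENNReal.toReal_ofReal (hρ_nonneg y), smul_eq_mul, mul_comm,
    Real.norm_of_nonneg (mul_nonneg (Real.exp_nonneg _) (hρ_nonneg y))]
  gcongr
  exact hρg y

end ExponentialDomination

section WeakDerivatives

theorem integral_mul_inner_fderiv_eq_neg {F : Type*} [NormedAddCommGroup F]
    [InnerProductSpace ℝ F] [FiniteDimensional ℝ F] [MeasurableSpace F] [BorelSpace F]
    {μ : Measure F} [μ.IsAddHaarMeasure] {f : F → ℝ} {g h : F → F}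
    (hf : ∀ x, HasGradientAt f (g x) x) (hg : Continuous g) (hh : ContDiff ℝ 1 h)
    (hsupp : HasCompactSupport h) (v w : F) :
    ∫ x, f x * ⟪fderiv ℝ h x v, w⟫ ∂μ = -∫ x, ⟪g x, v⟫ * ⟪h x, w⟫ ∂μ := by
  have hfc : Continuous f := continuous_iff_continuousAt.2 fun x => (hf x).continuousAt
  have hhc : Continuous h := hh.continuous
  have : Continuous (fderiv ℝ h) := hh.continuous_fderiv one_ne_zero
  have hf_deriv (x : F) : fderiv ℝ f x v = ⟪g x, v⟫ := by
    simp [(hf x).hasFDerivAt.fderiv]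
  have hh_diff : Differentiable ℝ h := hh.differentiable one_ne_zero
  have hh_deriv (x : F) : fderiv ℝ (fun x => ⟪h x, w⟫) x v = ⟪fderiv ℝ h x v, w⟫ := by
    simp [fderiv_inner_apply ℝ (hh_diff x) (differentiableAt_const w)]
  simp only [← hf_deriv, ← hh_deriv]
  refine integral_mul_fderiv_eq_neg_fderiv_mul_of_integrable ?_ ?_ ?_
    (fun x _ => (hf x).differentiableAt) (fun x _ => (hh_diff x).inner ℝ (differentiableAt_const w))
  · simp only [hf_deriv]
    exact Continuous.integrable_of_hasCompactSupport (by fun_prop)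
      (hsupp.mono fun x => mt fun h0 => by simp [h0])
  · simp only [hh_deriv]
    exact Continuous.integrable_of_hasCompactSupport (by fun_prop)
      ((hsupp.fderiv (𝕜 := ℝ)).mono fun x => mt fun h0 => by simp [h0])
  · exact Continuous.integrable_of_hasCompactSupport (by fun_prop)
      (hsupp.mono fun x => mt fun h0 => by simp [h0])

theorem HasWeakGradient.of_hasGradientAt {f : E → ℝ} {g : E → E}
    (hf : ∀ x, HasGradientAt f (g x) x) (hg : Continuous g) : HasWeakGradient f g := by
  have hfc : Continuous f := continuous_iff_continuousAt.2 fun x => (hf x).continuousAt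
  refine ⟨hfc.locallyIntegrable, hg.locallyIntegrable, fun h hh hsupp => ?_⟩
  have hhc : Continuous h := hh.continuous
  have : Continuous (fderiv ℝ h) := hh.continuous_fderiv (by simp)
  set e : Fin d → E := fun i => EuclideanSpace.single i 1
  have hint_div (i : Fin d) : Integrable fun x => f x * ⟪fderiv ℝ h x (e i), e i⟫ :=
    Continuous.integrable_of_hasCompactSupport (by fun_prop)
      ((hsupp.fderiv (𝕜 := ℝ)).mono fun x => mt fun h0 => by simp [h0])
  have hint_grad (i : Fin d) : Integrable fun x => ⟪g x, e i⟫ * ⟪h x, e i⟫ :=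
    Continuous.integrable_of_hasCompactSupport (by fun_prop)
      (hsupp.mono fun x => mt fun h0 => by simp [h0])
  calc ∫ x, f x * dvg h x = ∫ x, ∑ i, f x * ⟪fderiv ℝ h x (e i), e i⟫ := by
        simp only [dvg, Finset.mul_sum, e]
    _ = ∑ i, -∫ x, ⟪g x, e i⟫ * ⟪h x, e i⟫ := by
        rw [integral_finsetSum _ fun i _ => hint_div i]
        exact Finset.sum_congr rfl fun i _ =>
          integral_mul_inner_fderiv_eq_neg hf hg (hh.of_le (by simp)) hsupp (e i) (e i)
    _ = -∫ x, ∑ i, ⟪g x, e i⟫ * ⟪h x, e i⟫ := by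
        rw [Finset.sum_neg_distrib, integral_finsetSum _ fun i _ => hint_grad i]
    _ = -∫ x, ⟪g x, h x⟫ := by
        simp [e, PiLp.inner_apply, mul_comm]

theorem HasWeakJacobian.of_hasFDerivAt {f : E → E} {A : E → E →L[ℝ] E}
    (hf : ∀ x, HasFDerivAt f (A x) x) (hA : Continuous A) : HasWeakJacobian f A := by
  refine fun i => .of_hasGradientAt (fun x => ?_)
    ((ContinuousLinearMap.adjoint.continuous.comp hA).clm_apply continuous_const)
  refine ((innerSLFlip ℝ (EuclideanSpace.single i 1)).hasFDerivAt.comp x (hf x)).congr_fderiv ?_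
  ext v
  simp only [ContinuousLinearMap.comp_apply, InnerProductSpace.toDual_apply_apply,
    ContinuousLinearMap.adjoint_inner_left]
  exact (innerSLFlip_apply_apply ..).trans (real_inner_comm ..)

end WeakDerivatives

section PartialDerivatives

variable {c : EuclideanSpace ℝ (Fin d) × EuclideanSpace ℝ (Fin d) → ℝ} {R : NNReal}

theorem hasGradientAt_gradx (hc : Differentiable ℝ c) (x y : E) :
    HasGradientAt (fun x' => c (x', y)) (gradx c x y) x :=
  ((hc (x, y)).comp x (hasFDerivAt_prodMk_left x y).differentiableAt).hasGradientAt

theorem gradx_eq (hc : Differentiable ℝ c) (z : E × E) :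
    gradx c z.1 z.2 =
      (InnerProductSpace.toDual ℝ E).symm ((fderiv ℝ c z).comp (.inl ℝ E E)) := by
  rw [gradx, gradient]
  congr 1
  exact ((hc z).hasFDerivAt.comp z.1 (hasFDerivAt_prodMk_left z.1 z.2)).fderiv

theorem contDiff_gradx {n : WithTop ℕ∞} (hc : ContDiff ℝ (n + 1) c) :
    ContDiff ℝ n fun z : E × E => gradx c z.1 z.2 := by
  simp only [gradx_eq (hc.differentiable (by simp))]
  exact (InnerProductSpace.toDual ℝ E).symm.contDiff.comp
    ((hc.fderiv_right le_rfl).clm_comp contDiff_const)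

theorem hasFDerivAt_gradx (hc : ContDiff ℝ 2 c) (x y : E) :
    HasFDerivAt (fun x' => gradx c x' y) (hessx c x y) x :=
  (((contDiff_gradx (n := 1) hc).comp (contDiff_prodMk_left y)).differentiable
    (by simp) x).hasFDerivAt

theorem continuous_hessx (hc : ContDiff ℝ 2 c) :
    Continuous fun z : E × E => hessx c z.1 z.2 :=
  (ContDiff.fderiv (n := 0) (m := 1) (f := fun (z : E × E) x => gradx c x z.2)
    ((contDiff_gradx hc).comp (contDiff_snd.prodMk (contDiff_snd.comp contDiff_fst)))
    contDiff_fst (by simp)).continuous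

theorem lipschitzWith_gradx (hc : ContDiff ℝ 2 c) (hR : ∀ z, ‖iteratedFDeriv ℝ 2 c z‖ ≤ R) :
    LipschitzWith R fun z : E × E => gradx c z.1 z.2 := by
  have hlip : LipschitzWith R (fderiv ℝ c) :=
    lipschitzWith_of_nnnorm_fderiv_le ((hc.fderiv_right (m := 1) le_rfl).differentiable (by simp))
      fun z => by
        rw [← NNReal.coe_le_coe, coe_nnnorm, ← norm_iteratedFDeriv_one, norm_iteratedFDeriv_fderiv]
        exact hR z
  refine LipschitzWith.of_dist_le_mul fun z w => ?_
  simp only [gradx_eq (hc.differentiable two_ne_zero), LinearIsometryEquiv.dist_map]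
  calc dist ((fderiv ℝ c z).comp (.inl ℝ E E)) ((fderiv ℝ c w).comp (.inl ℝ E E))
      = ‖(fderiv ℝ c z - fderiv ℝ c w).comp (.inl ℝ E E)‖ := by
        rw [dist_eq_norm, ContinuousLinearMap.sub_comp]
    _ ≤ ‖fderiv ℝ c z - fderiv ℝ c w‖ * ‖ContinuousLinearMap.inl ℝ E E‖ :=
        ContinuousLinearMap.opNorm_comp_le _ _
    _ ≤ ‖fderiv ℝ c z - fderiv ℝ c w‖ :=
        mul_le_of_le_one_right (norm_nonneg _) (ContinuousLinearMap.norm_inl_le_one ℝ E E)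
    _ ≤ R * dist z w := by
        rw [← dist_eq_norm]
        exact hlip.dist_le_mul z w

theorem norm_hessx_le (hR : LipschitzWith R fun z : E × E => gradx c z.1 z.2) (x y : E) :
    ‖hessx c x y‖ ≤ R :=
  norm_fderiv_le_of_lipschitz ℝ <| LipschitzWith.of_dist_le_mul fun x₁ x₂ => by
    simpa using hR.dist_le_mul (x₁, y) (x₂, y)

theorem locallyExpDominated_hessx {ν : Measure E} (hc : ContDiff ℝ 2 c)
    (hR : LipschitzWith R fun z : E × E => gradx c z.1 z.2) :
    LocallyExpDominated (hessx c) ν :=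
  .of_exists_eventually_norm_le
    (fun x => ((continuous_hessx hc).comp (.prodMk_right x)).aestronglyMeasurable)
    fun _ => ⟨R, 0, Eventually.of_forall fun x y => by simpa using norm_hessx_le hR x y⟩

theorem abs_sub_cost_zero_le (hc : Differentiable ℝ c)
    (hR : LipschitzWith R fun z : E × E => gradx c z.1 z.2) {x : E} {r : ℝ} (hx : ‖x‖ ≤ r)
    (y : E) : |c (x, y) - c (0, y)| ≤ (‖gradx c 0 0‖ + R * (r + 1)) * r * (1 + ‖y‖) := by
  have hr : 0 ≤ r := (norm_nonneg x).trans hx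
  have hgrad : ∀ x' ∈ Metric.closedBall (0 : E) r,
      ‖InnerProductSpace.toDual ℝ E (gradx c x' y)‖ ≤ ‖gradx c 0 0‖ + R * (r + ‖y‖) := by
    intro x' hx'
    rw [mem_closedBall_zero_iff] at hx'
    have hnorm : ‖(x', y)‖ ≤ r + ‖y‖ :=
      norm_prod_le_iff.2 ⟨hx'.trans (le_add_of_nonneg_right (norm_nonneg y)),
        le_add_of_nonneg_left hr⟩
    have hlip : ‖gradx c x' y - gradx c 0 0‖ ≤ R * ‖(x', y)‖ := by
      simpa using hR.norm_sub_le (x', y) 0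
    rw [LinearIsometryEquiv.norm_map]
    exact (norm_le_insert' _ (gradx c 0 0)).trans (by gcongr; exact hlip.trans (by gcongr))
  calc |c (x, y) - c (0, y)| ≤ (‖gradx c 0 0‖ + R * (r + ‖y‖)) * ‖x - 0‖ :=
        (convex_closedBall (0 : E) r).norm_image_sub_le_of_norm_hasFDerivWithin_le
          (f := fun x' => c (x', y))
          (fun x' _ => (hasGradientAt_gradx hc x' y).hasFDerivAt.hasFDerivWithinAt) hgrad
          (Metric.mem_closedBall_self hr) (mem_closedBall_zero_iff.2 hx)
    _ ≤ (‖gradx c 0 0‖ + R * (r + ‖y‖)) * r := by gcongr; simpa using hx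
    _ ≤ (‖gradx c 0 0‖ + R * (r + 1)) * (1 + ‖y‖) * r := by
        gcongr
        have : 0 ≤ (‖gradx c 0 0‖ + R * r) * ‖y‖ := by positivity
        linarith
    _ = (‖gradx c 0 0‖ + R * (r + 1)) * r * (1 + ‖y‖) := by ring

end PartialDerivatives


section SchrodingerSystem

variable {ε : ℝ} {c : EuclideanSpace ℝ (Fin d) × EuclideanSpace ℝ (Fin d) → ℝ}
  {φ ψ : EuclideanSpace ℝ (Fin d) → ℝ} {μ ν : Measure (EuclideanSpace ℝ (Fin d))}
  {R : NNReal}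

theorem schrDensity_pos (x y : E) : 0 < schrDensity ε c φ ψ x y := Real.exp_pos _

theorem schrDensity_eq_exp_mul (x y : E) :
    schrDensity ε c φ ψ x y = Real.exp (φ x / ε) * schrDensity ε c 0 ψ x y := by
  simp only [schrDensity, Pi.zero_apply, zero_add, ← Real.exp_add, ← add_div, add_sub_assoc]

theorem schrDensity_swap (x y : E) :
    schrDensity ε (fun z => c (z.2, z.1)) ψ φ y x = schrDensity ε c φ ψ x y := by
  simp only [schrDensity, add_comm]

theorem continuous_schrDensity_left (hφ : Continuous φ) (hc : Continuous c) (y : E) :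
    Continuous fun x => schrDensity ε c φ ψ x y := by
  unfold schrDensity
  fun_prop

theorem hasGradientAt_schrDensity {g x : E} (hφ : HasGradientAt φ g x)
    (hc : Differentiable ℝ c) (y : E) :
    HasGradientAt (fun x' => schrDensity ε c φ ψ x' y)
      (schrDensity ε c φ ψ x y • -ε⁻¹ • (gradx c x y - g)) x := by
  have hexponent : HasFDerivAt (fun x' => (φ x' + ψ y - c (x', y)) * ε⁻¹) _ x :=
    ((hφ.hasFDerivAt.add_const (ψ y)).sub (hasGradientAt_gradx hc x y).hasFDerivAt).mul_const ε⁻¹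
  refine hexponent.exp.congr_fderiv ?_
  rw [← map_sub, ← map_smul, ← map_smul, schrDensity, div_eq_mul_inv, neg_smul, ← smul_neg, neg_sub]

theorem integrable_schrDensity_zero {x : E} (hs1 : ∫ y, schrDensity ε c φ ψ x y ∂ν = 1) :
    Integrable (schrDensity ε c 0 ψ x) ν := by
  have hint : Integrable (schrDensity ε c φ ψ x) ν :=
    .of_integral_ne_zero (hs1.trans_ne one_ne_zero)
  rw [funext (schrDensity_eq_exp_mul (φ := φ) x)] at hint
  exact (integrable_const_mul_iff (isUnit_iff_ne_zero.2 (Real.exp_pos _).ne') _).1 hint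

theorem div_le_div_abs {a b : ℝ} (h : |a| ≤ b) (ε : ℝ) : a / ε ≤ b / |ε| :=
  calc a / ε ≤ |a| / |ε| := (le_abs_self _).trans_eq (abs_div a ε)
    _ ≤ b / |ε| := by gcongr

theorem schrDensity_zero_mul_schrDensity_le {A : ℝ} {x y : E}
    (hA : |c (x, y) - c (0, y)| ≤ A * (1 + ‖y‖)) (hA0 : |c (x, 0) - c (0, 0)| ≤ A) :
    schrDensity ε c 0 ψ 0 y * schrDensity ε c φ ψ x 0 ≤
      schrDensity ε c 0 ψ 0 0 * Real.exp (A * (2 + ‖y‖) / |ε|) * schrDensity ε c φ ψ x y := by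
  set q : ℝ := (c (x, y) - c (0, y)) - (c (x, 0) - c (0, 0)) with hq
  have hqε : q / ε ≤ A * (2 + ‖y‖) / |ε| := div_le_div_abs
    (by linarith [abs_sub (c (x, y) - c (0, y)) (c (x, 0) - c (0, 0))]) ε
  calc schrDensity ε c 0 ψ 0 y * schrDensity ε c φ ψ x 0
      = schrDensity ε c 0 ψ 0 0 * Real.exp (q / ε) * schrDensity ε c φ ψ x y := by
        simp only [schrDensity, ← Real.exp_add, Pi.zero_apply, hq]
        congr 1
        ring
    _ ≤ _ := by
        gcongr
        · exact (schrDensity_pos x y).le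
        · exact (schrDensity_pos 0 0).le

theorem exists_setIntegral_schrDensity_pos {y : E}
    (hs2 : ∫ x, schrDensity ε c φ ψ x y ∂μ = 1) :
    ∃ r : ℝ, 0 < ∫ x in Metric.ball 0 r, schrDensity ε c φ ψ x y ∂μ := by
  have hint : Integrable (fun x => schrDensity ε c φ ψ x y) μ :=
    .of_integral_ne_zero (hs2.trans_ne one_ne_zero)
  have hμ : μ ≠ 0 := by
    rintro rfl
    simp at hs2
  obtain ⟨n, hn⟩ := exists_pos_ball (0 : E) hμ
  refine ⟨n, (integral_pos_iff_support_of_nonneg (fun x => (schrDensity_pos x y).le)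
    hint.integrableOn).2 ?_⟩
  rwa [Function.support_eq_univ fun x => (schrDensity_pos x y).ne', Measure.restrict_apply_univ]

theorem exists_schrDensity_zero_le (hc : Differentiable ℝ c)
    (hR : LipschitzWith R fun z : E × E => gradx c z.1 z.2)
    (hs2 : ∀ y, ∫ x, schrDensity ε c φ ψ x y ∂μ = 1) :
    ∃ C K : ℝ, ∀ y, schrDensity ε c 0 ψ 0 y ≤ C * Real.exp (K * ‖y‖) := by
  have hint (y : E) : Integrable (fun x => schrDensity ε c φ ψ x y) μ :=
    .of_integral_ne_zero ((hs2 y).trans_ne one_ne_zero)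
  obtain ⟨r, hpos⟩ := exists_setIntegral_schrDensity_pos (hs2 0)
  set m : ℝ := ∫ x in Metric.ball 0 r, schrDensity ε c φ ψ x 0 ∂μ
  set A : ℝ := (‖gradx c 0 0‖ + R * (r + 1)) * r
  refine ⟨schrDensity ε c 0 ψ 0 0 * Real.exp (A * 2 / |ε|) / m, A / |ε|, fun y => ?_⟩
  set B : ℝ := schrDensity ε c 0 ψ 0 0 * Real.exp (A * (2 + ‖y‖) / |ε|)
  have hB : 0 ≤ B := mul_nonneg (schrDensity_pos 0 0).le (Real.exp_nonneg _)
  have hmul : schrDensity ε c 0 ψ 0 y * m ≤ B :=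
    calc schrDensity ε c 0 ψ 0 y * m
        = ∫ x in Metric.ball 0 r, schrDensity ε c 0 ψ 0 y * schrDensity ε c φ ψ x 0 ∂μ :=
          (integral_const_mul _ _).symm
      _ ≤ ∫ x in Metric.ball 0 r, B * schrDensity ε c φ ψ x y ∂μ := by
          refine setIntegral_mono_on ((hint 0).const_mul _).integrableOn
            ((hint y).const_mul _).integrableOn measurableSet_ball fun x hx => ?_
          have hx : ‖x‖ ≤ r := (mem_ball_zero_iff.1 hx).le
          exact schrDensity_zero_mul_schrDensity_le (abs_sub_cost_zero_le hc hR hx y)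
            (by simpa using abs_sub_cost_zero_le hc hR hx 0)
      _ ≤ ∫ x, B * schrDensity ε c φ ψ x y ∂μ :=
          setIntegral_le_integral ((hint y).const_mul _)
            (Eventually.of_forall fun x => mul_nonneg hB (schrDensity_pos x y).le)
      _ = B := by rw [integral_const_mul, hs2, mul_one]
  calc schrDensity ε c 0 ψ 0 y ≤ B / m := (le_div_iff₀ hpos).2 hmul
    _ = _ := by
      have hexponent : A * (2 + ‖y‖) / |ε| = A * 2 / |ε| + A / |ε| * ‖y‖ := by ring
      simp only [B, hexponent, Real.exp_add]
      ring

theorem locallyExpDominated_schrDensity_zero (hc : Differentiable ℝ c)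
    (hR : LipschitzWith R fun z : E × E => gradx c z.1 z.2)
    (hs1 : ∀ x, ∫ y, schrDensity ε c φ ψ x y ∂ν = 1)
    (hs2 : ∀ y, ∫ x, schrDensity ε c φ ψ x y ∂μ = 1) :
    LocallyExpDominated (schrDensity ε c 0 ψ) ν := by
  obtain ⟨C, K, hCK⟩ := exists_schrDensity_zero_le hc hR hs2
  refine .of_exists_eventually_norm_le
    (fun x => (integrable_schrDensity_zero (hs1 x)).aestronglyMeasurable) fun x₀ => ?_
  set A : ℝ := (‖gradx c 0 0‖ + R * (‖x₀‖ + 1 + 1)) * (‖x₀‖ + 1)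
  refine ⟨C * Real.exp (A / |ε|), K + A / |ε|, ?_⟩
  filter_upwards [continuous_norm.continuousAt.eventually_le_const (lt_add_one ‖x₀‖)] with x hx y
  have hcost : (c (0, y) - c (x, y)) / ε ≤ A * (1 + ‖y‖) / |ε| :=
    div_le_div_abs (abs_sub_comm (c (0, y)) _ ▸ abs_sub_cost_zero_le hc hR hx y) ε
  calc ‖schrDensity ε c 0 ψ x y‖ = schrDensity ε c 0 ψ x y :=
      Real.norm_of_nonneg (schrDensity_pos x y).le
    _ = schrDensity ε c 0 ψ 0 y * Real.exp ((c (0, y) - c (x, y)) / ε) := by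
      simp only [schrDensity, ← Real.exp_add, Pi.zero_apply]
      congr 1
      ring
    _ ≤ (C * Real.exp (K * ‖y‖)) * Real.exp (A * (1 + ‖y‖) / |ε|) := by
      gcongr
      · exact (schrDensity_pos 0 y).le.trans (hCK y)
      · exact hCK y
    _ = C * Real.exp (A / |ε|) * Real.exp ((K + A / |ε|) * ‖y‖) := by
      have hexponent : A * (1 + ‖y‖) / |ε| = A / |ε| + A / |ε| * ‖y‖ := by ring
      simp only [hexponent, add_mul, Real.exp_add]
      ring

theorem exp_mul_integral_schrDensity_zero {x : E}
    (hs1 : ∫ y, schrDensity ε c φ ψ x y ∂ν = 1) :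
    Real.exp (φ x / ε) * ∫ y, schrDensity ε c 0 ψ x y ∂ν = 1 := by
  simp only [← integral_const_mul, ← schrDensity_eq_exp_mul, hs1]

theorem potential_eq_neg_mul_log (hε : ε ≠ 0) {x : E}
    (hs1 : ∫ y, schrDensity ε c φ ψ x y ∂ν = 1) :
    φ x = -ε * Real.log (∫ y, schrDensity ε c 0 ψ x y ∂ν) := by
  rw [eq_inv_of_mul_eq_one_right (exp_mul_integral_schrDensity_zero hs1),
    Real.log_inv, Real.log_exp]
  field_simp

theorem hasGradientAt_potential (hε : ε ≠ 0) (hν : HasExpMoments ν) (hc : Differentiable ℝ c)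
    (hR : LipschitzWith R fun z : E × E => gradx c z.1 z.2)
    (hw : LocallyExpDominated (schrDensity ε c 0 ψ) ν)
    (hs1 : ∀ x, ∫ y, schrDensity ε c φ ψ x y ∂ν = 1) (x : E) :
    HasGradientAt φ (∫ y, schrDensity ε c φ ψ x y • gradx c x y ∂ν) x := by
  set F : E → ℝ := fun x => ∫ y, schrDensity ε c 0 ψ x y ∂ν
  set G : E := ∫ y, schrDensity ε c 0 ψ x y • gradx c x y ∂ν with hG
  have hFx : Real.exp (φ x / ε) * F x = 1 := exp_mul_integral_schrDensity_zero (hs1 x)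
  have hgrad_dom : LocallyExpDominated (gradx c) ν := .of_lipschitzWith hR
  have hFgrad : HasGradientAt F (-ε⁻¹ • G) x := by
    have hgradient := hw.hasGradientAt_integral hν (hw.smul (hgrad_dom.const_smul (-ε⁻¹)))
      (fun x y => by
        simpa only [sub_zero] using
          hasGradientAt_schrDensity (φ := 0) (hasGradientAt_const x (0 : ℝ)) hc y) x
    simpa only [smul_comm _ (-ε⁻¹), integral_smul] using hgradient
  have hφ : φ = fun x => -ε * Real.log (F x) :=
    funext fun x => potential_eq_neg_mul_log hε (hs1 x)
  have hgrad : ∫ y, schrDensity ε c φ ψ x y • gradx c x y ∂ν = Real.exp (φ x / ε) • G := by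
    simp only [schrDensity_eq_exp_mul (φ := φ), mul_smul, integral_smul, hG]
  rw [hgrad]
  have hderiv := (hFgrad.hasFDerivAt.log (right_ne_zero_of_mul_eq_one hFx)).const_mul (-ε)
  rw [← hφ] at hderiv
  refine hderiv.congr_fderiv ?_
  rw [← map_smul, ← map_smul, ← eq_inv_of_mul_eq_one_left hFx, smul_comm, smul_smul (-ε)]
  simp [hε]

/-- The outer product as a bounded bilinear map. -/
def outerL : E →L[ℝ] E →L[ℝ] E →L[ℝ] E :=
  ((ContinuousLinearMap.smulRightL ℝ E E).comp (innerSL ℝ)).flip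

theorem outerL_apply (a b : E) : outerL a b = outer a b := rfl

theorem continuous_outer {X : Type*} [TopologicalSpace X] {f g : X → E}
    (hf : Continuous f) (hg : Continuous g) : Continuous fun x => outer (f x) (g x) :=
  (outerL.continuous.comp hf).clm_apply hg

theorem hasFDerivAt_integral_schrDensity_smul_gradx (hν : HasExpMoments ν)
    (hc : ContDiff ℝ 2 c) (hR : LipschitzWith R fun z : E × E => gradx c z.1 z.2)
    (hp : LocallyExpDominated (schrDensity ε c φ ψ) ν) {g : E → E}
    (hφ : ∀ x, HasGradientAt φ (g x) x) (hg : Continuous g) (x : E) :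
    HasFDerivAt (fun x => ∫ y, schrDensity ε c φ ψ x y • gradx c x y ∂ν)
      (∫ y, schrDensity ε c φ ψ x y •
        (hessx c x y - ε⁻¹ • outer (gradx c x y) (gradx c x y - g x)) ∂ν) x := by
  have hgrad : LocallyExpDominated (gradx c) ν := .of_lipschitzWith hR
  refine (hp.smul hgrad).hasFDerivAt_integral hν
    (hp.smul ((locallyExpDominated_hessx hc hR).sub
      ((hgrad.bilin outerL (hgrad.sub (.of_continuous hg))).const_smul ε⁻¹))) (fun x y => ?_) x
  have hp_deriv := (hasGradientAt_schrDensity (ε := ε) (ψ := ψ) (hφ x)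
    (hc.differentiable two_ne_zero) y).hasFDerivAt
  refine (hp_deriv.smul (hasFDerivAt_gradx hc x y)).congr_fderiv ?_
  ext1 v
  simp only [neg_smul, smul_neg, map_neg, map_smul, map_sub, add_apply, smul_apply, neg_apply,
    sub_apply, ContinuousLinearMap.smulRight_apply, InnerProductSpace.toDual_apply_apply,
    smul_eq_mul, outerL_apply, outer, coe_innerSL_apply]
  module

theorem integral_schrDensity_smul_hessian (hν : HasExpMoments ν)
    (hc : ContDiff ℝ 2 c) (hR : LipschitzWith R fun z : E × E => gradx c z.1 z.2)
    (hp : LocallyExpDominated (schrDensity ε c φ ψ) ν) (x g : E) :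
    ∫ y, schrDensity ε c φ ψ x y •
        (hessx c x y - ε⁻¹ • outer (gradx c x y) (gradx c x y - g)) ∂ν =
      (∫ y, schrDensity ε c φ ψ x y • hessx c x y ∂ν)
        - ε⁻¹ • ((∫ y, schrDensity ε c φ ψ x y • outer (gradx c x y) (gradx c x y) ∂ν)
          - outer (∫ y, schrDensity ε c φ ψ x y • gradx c x y ∂ν) g) := by
  have hgrad : LocallyExpDominated (gradx c) ν := .of_lipschitzWith hR
  have hint_hess := (hp.smul (locallyExpDominated_hessx hc hR)).integrable hν x
  have hint_grad := (hp.smul hgrad).integrable hν x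
  have hint_outer := (hp.smul (hgrad.bilin outerL hgrad)).integrable hν x
  have hint_mean := (outerL.flip g).integrable_comp hint_grad
  calc _ = ∫ y, schrDensity ε c φ ψ x y • hessx c x y
          - ε⁻¹ • (schrDensity ε c φ ψ x y • outerL (gradx c x y) (gradx c x y)
            - outerL.flip g (schrDensity ε c φ ψ x y • gradx c x y)) ∂ν := by
        simp only [← outerL_apply, map_sub, map_smul, smul_sub, smul_comm _ ε⁻¹,
          ContinuousLinearMap.flip_apply]
    _ = (∫ y, schrDensity ε c φ ψ x y • hessx c x y ∂ν)
          - ε⁻¹ • ((∫ y, schrDensity ε c φ ψ x y • outerL (gradx c x y) (gradx c x y) ∂ν)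
            - ∫ y, outerL.flip g (schrDensity ε c φ ψ x y • gradx c x y) ∂ν) := by
        rw [integral_sub hint_hess, integral_smul, integral_sub hint_outer hint_mean]
        exact (hint_outer.sub hint_mean).smul ε⁻¹
    _ = _ := by
        rw [ContinuousLinearMap.integral_comp_comm _ hint_grad]
        rfl

theorem hasWeakGradient_and_hasWeakJacobian_potential (hε : ε ≠ 0) (hν : HasExpMoments ν)
    (hc : ContDiff ℝ 2 c) (hHess : ∃ R : ℝ, ∀ z : E × E, ‖iteratedFDeriv ℝ 2 c z‖ ≤ R)
    (hs1 : ∀ x, ∫ y, schrDensity ε c φ ψ x y ∂ν = 1)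
    (hs2 : ∀ y, ∫ x, schrDensity ε c φ ψ x y ∂μ = 1) :
    (HasWeakGradient φ fun x => ∫ y, schrDensity ε c φ ψ x y • gradx c x y ∂ν) ∧
    HasWeakJacobian (fun x => ∫ y, schrDensity ε c φ ψ x y • gradx c x y ∂ν) fun x =>
      (∫ y, schrDensity ε c φ ψ x y • hessx c x y ∂ν)
        - ε⁻¹ • ((∫ y, schrDensity ε c φ ψ x y • outer (gradx c x y) (gradx c x y) ∂ν)
          - outer (∫ y, schrDensity ε c φ ψ x y • gradx c x y ∂ν)
              (∫ y, schrDensity ε c φ ψ x y • gradx c x y ∂ν)) := by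
  obtain ⟨R, hR⟩ := hHess
  replace hR := lipschitzWith_gradx hc fun z => (hR z).trans (Real.le_coe_toNNReal R)
  set g : E → E := fun x => ∫ y, schrDensity ε c φ ψ x y • gradx c x y ∂ν
  have hcd : Differentiable ℝ c := hc.differentiable two_ne_zero
  have hw := locallyExpDominated_schrDensity_zero hcd hR hs1 hs2
  have hφ : ∀ x, HasGradientAt φ (g x) x := hasGradientAt_potential hε hν hcd hR hw hs1
  have hφc : Continuous φ := continuous_iff_continuousAt.2 fun x => (hφ x).continuousAt
  have hp : LocallyExpDominated (schrDensity ε c φ ψ) ν := by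
    rw [funext₂ (schrDensity_eq_exp_mul (φ := φ))]
    exact (LocallyExpDominated.of_continuous (by fun_prop)).smul hw
  have hpc := continuous_schrDensity_left (ε := ε) (ψ := ψ) hφc hc.continuous
  have hgrad : LocallyExpDominated (gradx c) ν := .of_lipschitzWith hR
  have hgradc (y : E) : Continuous fun x => gradx c x y := hR.continuous.comp (.prodMk_left y)
  have hhessc (y : E) : Continuous fun x => hessx c x y :=
    (continuous_hessx hc).comp (.prodMk_left y)
  have hg : Continuous g :=
    (hp.smul hgrad).continuous_integral hν fun y => (hpc y).smul (hgradc y)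
  refine ⟨.of_hasGradientAt hφ hg, .of_hasFDerivAt (fun x => ?_) ?_⟩
  · rw [← integral_schrDensity_smul_hessian hν hc hR hp x (g x)]
    exact hasFDerivAt_integral_schrDensity_smul_gradx hν hc hR hp hφ hg x
  · have hint_hess := (hp.smul (locallyExpDominated_hessx hc hR)).continuous_integral hν
      fun y => (hpc y).smul (hhessc y)
    have hint_outer := (hp.smul (hgrad.bilin outerL hgrad)).continuous_integral hν
      fun y => (hpc y).smul (continuous_outer (hgradc y) (hgradc y))
    exact hint_hess.sub ((hint_outer.sub (continuous_outer hg hg)).const_smul ε⁻¹)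

end SchrodingerSystem

theorem schrodinger_potentials_derivatives_general
    (ε : ℝ) (hε : ε ≠ 0) (μ ν : Measure E) (hμ : HasExpMoments μ) (hν : HasExpMoments ν)
    (c : E × E → ℝ) (hc : ContDiff ℝ 2 c)
    (hHess : ∃ R : ℝ, ∀ z : E × E, ‖iteratedFDeriv ℝ 2 c z‖ ≤ R)
    (φ ψ : E → ℝ)
    (hs1 : ∀ x, ∫ y, schrDensity ε c φ ψ x y ∂ν = 1)
    (hs2 : ∀ y, ∫ x, schrDensity ε c φ ψ x y ∂μ = 1) :
    (HasWeakGradient φ fun x => ∫ y, schrDensity ε c φ ψ x y • gradx c x y ∂ν) ∧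
    (HasWeakGradient ψ fun y => ∫ x, schrDensity ε c φ ψ x y • grady c x y ∂μ) ∧
    (HasWeakJacobian (fun x => ∫ y, schrDensity ε c φ ψ x y • gradx c x y ∂ν)
      fun x =>
        (∫ y, schrDensity ε c φ ψ x y • hessx c x y ∂ν)
          - ε⁻¹ • ((∫ y, schrDensity ε c φ ψ x y • outer (gradx c x y) (gradx c x y) ∂ν)
            - outer (∫ y, schrDensity ε c φ ψ x y • gradx c x y ∂ν)
                (∫ y, schrDensity ε c φ ψ x y • gradx c x y ∂ν))) ∧
    (HasWeakJacobian (fun y => ∫ x, schrDensity ε c φ ψ x y • grady c x y ∂μ)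
      fun y =>
        (∫ x, schrDensity ε c φ ψ x y • hessy c x y ∂μ)
          - ε⁻¹ • ((∫ x, schrDensity ε c φ ψ x y • outer (grady c x y) (grady c x y) ∂μ)
            - outer (∫ x, schrDensity ε c φ ψ x y • grady c x y ∂μ)
                (∫ x, schrDensity ε c φ ψ x y • grady c x y ∂μ))) := by
  obtain ⟨hφ, hφ'⟩ := hasWeakGradient_and_hasWeakJacobian_potential hε hν hc hHess hs1 hs2
  let c' : E × E → ℝ := fun z => c (z.2, z.1)
  have hc' : ContDiff ℝ 2 c' := hc.comp (contDiff_snd.prodMk contDiff_fst)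
  have hHess' : ∃ R : ℝ, ∀ z : E × E, ‖iteratedFDeriv ℝ 2 c' z‖ ≤ R := hHess.imp fun R hR z =>
    ((LinearIsometryEquiv.prodComm ℝ E E).norm_iteratedFDeriv_comp_right c z 2).trans_le (hR _)
  obtain ⟨hψ, hψ'⟩ := hasWeakGradient_and_hasWeakJacobian_potential (ψ := φ) hε hμ hc' hHess'
    (by simpa only [c', schrDensity_swap] using hs2)
    (by simpa only [c', schrDensity_swap] using hs1)
  simp only [c', schrDensity_swap] at hψ hψ'
  exact ⟨hφ, hψ, hφ', hψ'⟩

/-- Derivatives of the Schrödinger potentials: `∇φ(x) = E_π[∇_x c(X,Y) | X = x]`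
(the conditional expectation being the explicit `ν`-integral against the conditional
density), `∇ψ(y) = E_π[∇_y c(X,Y) | Y = y]`, and the weak gradients are themselves
weakly differentiable with `∇²φ = E_π[∇²_{xx}c | X=x] − ε⁻¹ Cov_π(∇_x c | X=x)` and
`∇²ψ = E_π[∇²_{yy}c | Y=y] − ε⁻¹ Cov_π(∇_y c | Y=y)`. -/
theorem schrodinger_potentials_derivatives
    (ε : ℝ) (hε : 0 < ε)
    (U V : E → ℝ) (hU : ContDiff ℝ 2 U) (hV : ContDiff ℝ 2 V)
    (μ ν : Measure E)
    (hμ : μ = volume.withDensity fun x => ENNReal.ofReal (Real.exp (-U x)))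
    (hν : ν = volume.withDensity fun y => ENNReal.ofReal (Real.exp (-V y)))
    [IsProbabilityMeasure μ] [IsProbabilityMeasure ν]
    (δ : ℝ) (hδ : 0 < δ)
    (hsub : Integrable
      (fun x => Real.exp (δ * ‖x‖ ^ 2) * (Real.exp (-U x) + Real.exp (-V x))) volume)
    (c : E × E → ℝ) (hc0 : ∀ z, 0 ≤ c z) (hc : ContDiff ℝ 2 c)
    (hHess : ∃ R : ℝ, ∀ z : E × E, ‖iteratedFDeriv ℝ 2 c z‖ ≤ R)
    (φ ψ : E → ℝ) (hφm : Measurable φ) (hψm : Measurable ψ)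
    (hs1 : ∀ x, ∫ y, schrDensity ε c φ ψ x y ∂ν = 1)
    (hs2 : ∀ y, ∫ x, schrDensity ε c φ ψ x y ∂μ = 1) :
    (HasWeakGradient φ fun x => ∫ y, schrDensity ε c φ ψ x y • gradx c x y ∂ν) ∧
    (HasWeakGradient ψ fun y => ∫ x, schrDensity ε c φ ψ x y • grady c x y ∂μ) ∧
    (HasWeakJacobian (fun x => ∫ y, schrDensity ε c φ ψ x y • gradx c x y ∂ν)
      fun x =>
        (∫ y, schrDensity ε c φ ψ x y • hessx c x y ∂ν)
          - ε⁻¹ • ((∫ y, schrDensity ε c φ ψ x y • outer (gradx c x y) (gradx c x y) ∂ν)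
            - outer (∫ y, schrDensity ε c φ ψ x y • gradx c x y ∂ν)
                (∫ y, schrDensity ε c φ ψ x y • gradx c x y ∂ν))) ∧
    (HasWeakJacobian (fun y => ∫ x, schrDensity ε c φ ψ x y • grady c x y ∂μ)
      fun y =>
        (∫ x, schrDensity ε c φ ψ x y • hessy c x y ∂μ)
          - ε⁻¹ • ((∫ x, schrDensity ε c φ ψ x y • outer (grady c x y) (grady c x y) ∂μ)
            - outer (∫ x, schrDensity ε c φ ψ x y • grady c x y ∂μ)
                (∫ x, schrDensity ε c φ ψ x y • grady c x y ∂μ))) := by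
  have hμ_exp : HasExpMoments μ :=
    hμ ▸ hasExpMoments_withDensity hδ hU.continuous.neg.rexp.measurable
      (fun x => Real.exp_nonneg _) (fun x => le_add_of_nonneg_right (Real.exp_nonneg _)) hsub
  have hν_exp : HasExpMoments ν :=
    hν ▸ hasExpMoments_withDensity hδ hV.continuous.neg.rexp.measurable
      (fun y => Real.exp_nonneg _) (fun y => le_add_of_nonneg_left (Real.exp_nonneg _)) hsub
  exact schrodinger_potentials_derivatives_general ε hε.ne' μ ν hμ_exp hν_exp c hc hHess φ ψ hs1 hs2

end
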